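/- For each positive integer n, every real number m ≠ 0, and every real number s, the sum over all ordered trees T with n vertices of ∏_{v ∈ T} C(m, c_v) s^{c_v} · ∏_{v ∈ T} 1/(h_v · m^{h_v - 1}) equals s^{n-1}/n!, where C(m,k) = m(m-1)⋯(m-k+1)/k! is the generalized binomial coefficient, c_v is the number of children of v, and h_v is the hook length of v. -/

import Mathlib

/-- An ordered tree: a root together with a (possibly empty) list of ordered
subtrees, the children being linearly ordered by the list order. -/
inductive OTree : Type where
  | node : List OTree → OTree

/-- The number of vertices of an ordered tree. -/
def OTree.size : OTree → ℕ
  | .node ts => 1 + (ts.attach.map (fun x => OTree.size x.1)).sum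
decreasing_by
  simp only [OTree.node.sizeOf_spec]
  have := List.sizeOf_lt_of_mem x.2
  omega

/-- The product, over all vertices `v` of an ordered tree, of `f c_v h_v`,
where `c_v` is the number of children of `v` and `h_v` is the hook length of
`v` (the number of descendants of `v` including `v` itself). -/
def OTree.prodF (f : ℕ → ℕ → ℝ) : OTree → ℝ
  | .node ts => f ts.length (OTree.size (.node ts)) *
      (ts.attach.map (fun x => OTree.prodF f x.1)).prod
decreasing_by
  simp only [OTree.node.sizeOf_spec]
  have := List.sizeOf_lt_of_mem x.2
  omega

/-- The generalized binomial coefficient `C(m,k) = m(m-1)⋯(m-k+1)/k!`. -/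
noncomputable def genChoose (m : ℝ) (k : ℕ) : ℝ :=
  (∏ i ∈ Finset.range k, (m - i)) / Nat.factorial k

/-!
Let `F` be the generating function of ordered trees with vertex weights
`C(m, c) s ^ c / (h m ^ (h - 1))`. The children of the root of a tree with `n + 1` vertices form a
forest with `n` vertices, and forests of `k` trees are counted by `F ^ k`, so
`(n + 1) m ^ n [xⁿ⁺¹] F = [xⁿ] (1 + s F) ^ m`. As `F` has no constant term, this recurrence
determines it. The series `(exp (s x) - 1) / s` satisfies the same recurrence, because
`(1 + (exp x - 1)) ^ m = exp (m x)` as formal power series: both sides solve `f' = m f`, `f 0 = 1`.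
-/

open PowerSeries
open Finset.HasAntidiagonal (antidiagonal)

section CommSemiring

variable {R : Type*} [CommSemiring R]

theorem coeff_pow_eq_zero_of_lt {f : R⟦X⟧}
    (hf : constantCoeff f = 0) {n k : ℕ} (hnk : n < k) : coeff n (f ^ k) = 0 :=
  X_pow_dvd_iff.1 (pow_dvd_pow_of_dvd (X_dvd_iff.2 hf) k) n hnk

theorem constantCoeff_rescale (r : R) (f : R⟦X⟧) :
    constantCoeff (rescale r f) = constantCoeff f := by
  rw [← coeff_zero_eq_constantCoeff_apply, coeff_rescale, pow_zero, one_mul,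
    coeff_zero_eq_constantCoeff_apply]

theorem derivative_rescale (r : R) (f : R⟦X⟧) :
    d⁄dX R (rescale r f) = r • rescale r (d⁄dX R f) := by
  ext n
  simp only [coeff_derivative, coeff_rescale, coeff_smul, smul_eq_mul]
  ring

theorem eq_of_derivative_eq_smul [IsAddTorsionFree R] {r : R} {f g : R⟦X⟧}
    (hf : d⁄dX R f = r • f) (hg : d⁄dX R g = r • g)
    (h₀ : constantCoeff f = constantCoeff g) : f = g := by
  ext n
  induction n with
  | zero => simpa only [coeff_zero_eq_constantCoeff] using h₀
  | succ n ih =>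
    have hcoeff : coeff n (d⁄dX R f) = coeff n (d⁄dX R g) := by
      rw [hf, hg, coeff_smul, coeff_smul, ih]
    rw [coeff_derivative, coeff_derivative] at hcoeff
    refine nsmul_right_injective n.succ_ne_zero ?_
    simpa [mul_comm] using hcoeff

end CommSemiring

section CommRing

variable {R : Type*} [CommRing R]

theorem coeff_subst_eq_sum_range {f : R⟦X⟧} (hf : constantCoeff f = 0) (φ : R⟦X⟧) (n : ℕ) :
    coeff n (φ.subst f) = ∑ k ∈ Finset.range (n + 1), coeff k φ * coeff n (f ^ k) := by
  rw [coeff_subst' (.of_constantCoeff_zero' hf)]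
  refine finsum_eq_sum_of_support_subset _ (Function.support_subset_iff'.2 fun k hk ↦ ?_)
  rw [coeff_pow_eq_zero_of_lt hf (by simpa using hk), smul_zero]

theorem coeff_pow_congr {f g : R⟦X⟧} {n : ℕ} (h : ∀ i ≤ n, coeff i f = coeff i g) (k : ℕ) :
    coeff n (f ^ k) = coeff n (g ^ k) := by
  have hdvd : X ^ (n + 1) ∣ f - g :=
    X_pow_dvd_iff.2 fun i hi ↦ by rw [map_sub, h i (Nat.le_of_lt_succ hi), sub_self]
  rw [← sub_eq_zero, ← map_sub]
  exact X_pow_dvd_iff.1 (hdvd.trans (sub_dvd_pow_sub_pow f g k)) n n.lt_succ_self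

theorem eq_of_coeff_succ_eq_mul_coeff_subst {φ f g : R⟦X⟧} {u : ℕ → R}
    (hf₀ : constantCoeff f = 0) (hg₀ : constantCoeff g = 0)
    (hf : ∀ n, coeff (n + 1) f = u n * coeff n (φ.subst f))
    (hg : ∀ n, coeff (n + 1) g = u n * coeff n (φ.subst g)) : f = g := by
  ext n
  induction n using Nat.strong_induction_on with
  | _ n ih =>
    rcases n with _ | n
    · rw [coeff_zero_eq_constantCoeff, hf₀, hg₀]
    · rw [hf, hg, coeff_subst_eq_sum_range hf₀, coeff_subst_eq_sum_range hg₀]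
      simp only [coeff_pow_congr fun i hi ↦ ih i (Nat.lt_succ_of_le hi)]

theorem rescale_subst_eq_subst_smul {f : R⟦X⟧} (hf : HasSubst f) (r : R) (φ : R⟦X⟧) :
    (rescale r φ).subst f = φ.subst (r • f) := by
  rw [rescale_eq_subst, subst_comp_subst_apply (.smul_X' r) hf, subst_smul hf, subst_X hf]

theorem subst_rescale_eq_rescale_subst {f : R⟦X⟧} (hf : HasSubst f) (r : R) (φ : R⟦X⟧) :
    φ.subst (rescale r f) = rescale r (φ.subst f) := by
  rw [rescale_eq_subst, rescale_eq_subst, subst_comp_subst_apply hf (.smul_X' r)]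

theorem one_add_X_mul_derivative_binomialSeries [BinomialRing R] (r : R) :
    (1 + X) * d⁄dX R (binomialSeries R r) = r • binomialSeries R r := by
  have succ_mul_choose (n : ℕ) :
      (n + 1) * Ring.choose r (n + 1) = Ring.choose r n * (r - n) := by
    simpa using Ring.choose_smul_choose r n.le_succ
  ext n
  rcases n with _ | n
  · simp [-coeff_zero_eq_constantCoeff, add_mul, coeff_derivative, coeff_zero_X_mul]
  · simp only [add_mul, one_mul, map_add, coeff_succ_X_mul, coeff_derivative,
      binomialSeries_coeff, coeff_smul, smul_eq_mul, mul_one]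
    have hchoose := succ_mul_choose (n + 1)
    push_cast at hchoose ⊢
    linear_combination hchoose

theorem binomialSeries_subst_exp_sub_one [BinomialRing R] [Algebra ℚ R] (r : R) :
    (binomialSeries R r).subst (exp R - 1) = rescale r (exp R) := by
  have := BinomialRing.toIsAddTorsionFree (R := R)
  have hsubst := HasSubst.exp_sub_one (A := R)
  refine eq_of_derivative_eq_smul (r := r) ?_ ?_ ?_
  · calc d⁄dX R ((binomialSeries R r).subst (exp R - 1))
      _ = (d⁄dX R (binomialSeries R r)).subst (exp R - 1) * exp R := by
        rw [derivative_subst hsubst, map_sub, derivative_exp, derivative_one, sub_zero]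
      _ = ((1 + X) * d⁄dX R (binomialSeries R r)).subst (exp R - 1) := by
        have hone : (1 : R⟦X⟧).subst (exp R - 1) = 1 := by
          rw [← coe_substAlgHom hsubst, map_one]
        rw [subst_mul hsubst, subst_add hsubst, subst_X hsubst, hone]
        ring
      _ = r • (binomialSeries R r).subst (exp R - 1) := by
        rw [one_add_X_mul_derivative_binomialSeries, subst_smul hsubst]
  · rw [derivative_rescale, derivative_exp]
  · rw [constantCoeff_rescale, constantCoeff_exp, ← coeff_zero_eq_constantCoeff_apply,
      coeff_subst_eq_sum_range (by simp)]
    simp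

end CommRing

/-- The power series `(exp (s * X) - 1) / s`, with the division by `s` carried out coefficientwise
so that it also makes sense at `s = 0`, where it is `X`. -/
noncomputable def expSubOneDiv {K : Type*} [Field K] (s : K) : K⟦X⟧ :=
  X * mk fun n ↦ s ^ n / (n + 1).factorial

section Field

variable {K : Type*} [Field K]

theorem constantCoeff_expSubOneDiv (s : K) : constantCoeff (expSubOneDiv s) = 0 := by
  simp [expSubOneDiv]

theorem coeff_succ_expSubOneDiv (s : K) (n : ℕ) :
    coeff (n + 1) (expSubOneDiv s) = s ^ n / (n + 1).factorial := by
  rw [expSubOneDiv, coeff_succ_X_mul, coeff_mk]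

variable [CharZero K]

theorem smul_expSubOneDiv (s : K) : s • expSubOneDiv s = rescale s (exp K - 1) := by
  ext n
  rcases n with _ | n
  · simp [constantCoeff_expSubOneDiv, constantCoeff_rescale]
  · simp only [coeff_smul, coeff_succ_expSubOneDiv, coeff_rescale, map_sub, coeff_exp, coeff_one,
      n.succ_ne_zero, if_false, sub_zero, smul_eq_mul, map_div₀, map_one, map_natCast]
    ring

theorem rescale_binomialSeries_subst_expSubOneDiv (m s : K) :
    (rescale s (binomialSeries K m)).subst (expSubOneDiv s) = rescale (m * s) (exp K) := by
  rw [rescale_subst_eq_subst_smul (.of_constantCoeff_zero' (constantCoeff_expSubOneDiv s)),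
    smul_expSubOneDiv, subst_rescale_eq_rescale_subst .exp_sub_one,
    binomialSeries_subst_exp_sub_one, rescale_rescale]

theorem coeff_succ_expSubOneDiv_eq_mul_coeff_subst {m : K} (hm : m ≠ 0) (s : K) (n : ℕ) :
    coeff (n + 1) (expSubOneDiv s) = 1 / (((n + 1 : ℕ) : K) * m ^ n) *
      coeff n ((rescale s (binomialSeries K m)).subst (expSubOneDiv s)) := by
  rw [rescale_binomialSeries_subst_expSubOneDiv, coeff_succ_expSubOneDiv, coeff_rescale, coeff_exp,
    Nat.factorial_succ]
  simp only [map_div₀, map_one, map_natCast, mul_pow]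
  push_cast
  field_simp

end Field

theorem finite_setOf_length_le_forall_mem {α : Type*} {s : Set α} (hs : s.Finite) (n : ℕ) :
    {l : List α | l.length ≤ n ∧ ∀ x ∈ l, x ∈ s}.Finite := by
  have := hs.to_subtype
  refine ((List.finite_length_le s n).image (List.map Subtype.val)).subset ?_
  rintro l ⟨hlength, hmem⟩
  obtain ⟨l, rfl⟩ : l ∈ Set.range (List.map ((↑) : s → α)) := by rwa [Set.range_list_map_coe]
  exact ⟨l, by simpa using hlength, rfl⟩

namespace OTree

theorem induction_on_children {P : OTree → Prop}
    (node : ∀ ts : List OTree, (∀ t ∈ ts, P t) → P (.node ts)) : ∀ T, P T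
  | .node ts => node ts fun t _ ↦ induction_on_children node t

/-- The total number of vertices of an ordered forest, encoded as the list of its trees. -/
def forestSize (ts : List OTree) : ℕ := (ts.map size).sum

theorem size_node (ts : List OTree) : (node ts).size = forestSize ts + 1 := by
  rw [size, List.attach_map_val (f := size), forestSize, add_comm]

theorem size_pos (T : OTree) : 0 < T.size := by
  obtain ⟨ts⟩ := T
  rw [size_node]
  exact Nat.succ_pos _

theorem prodF_node (f : ℕ → ℕ → ℝ) (ts : List OTree) :
    (node ts).prodF f = f ts.length (forestSize ts + 1) * (ts.map (prodF f)).prod := by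
  rw [prodF, List.attach_map_val (f := prodF f), size_node]

theorem prodF_mul (f g : ℕ → ℕ → ℝ) (T : OTree) :
    T.prodF (fun c h ↦ f c h * g c h) = T.prodF f * T.prodF g := by
  induction T using induction_on_children with
  | node ts ih =>
    rw [prodF_node, prodF_node, prodF_node, List.map_congr_left ih, List.prod_map_mul]
    ring

theorem forestSize_cons (t : OTree) (ts : List OTree) :
    forestSize (t :: ts) = t.size + forestSize ts := by
  simp only [forestSize, List.map_cons, List.sum_cons]

theorem size_le_forestSize {t : OTree} {ts : List OTree} (ht : t ∈ ts) :
    t.size ≤ forestSize ts :=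
  List.le_sum_of_mem (List.mem_map_of_mem ht)

theorem length_le_forestSize (ts : List OTree) : ts.length ≤ forestSize ts := by
  have hone : ∀ k ∈ ts.map size, 1 ≤ k := by
    simpa only [List.forall_mem_map] using fun t _ ↦ Nat.one_le_iff_ne_zero.2 t.size_pos.ne'
  simpa [forestSize] using List.length_le_sum_of_one_le (ts.map size) hone

theorem finite_size_le (n : ℕ) : {T : OTree | T.size ≤ n}.Finite := by
  induction n with
  | zero => simp [(size_pos _).ne']
  | succ n ih =>
    refine ((finite_setOf_length_le_forall_mem ih n).image node).subset ?_
    rintro ⟨ts⟩ hT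
    have hts : forestSize ts ≤ n := by simpa [size_node] using hT
    exact ⟨ts, ⟨(length_le_forestSize ts).trans hts,
      fun t ht ↦ (size_le_forestSize ht).trans hts⟩, rfl⟩

theorem finite_forestSize_eq (n : ℕ) : {ts : List OTree | forestSize ts = n}.Finite := by
  refine (finite_setOf_length_le_forall_mem (finite_size_le n) n).subset ?_
  rintro ts rfl
  exact ⟨length_le_forestSize ts, fun t ht ↦ size_le_forestSize ht⟩

/-- The set `O(n)` of ordered trees with `n` vertices, as a finite set. -/
noncomputable def treesOfSize (n : ℕ) : Finset OTree :=
  ((finite_size_le n).subset fun _ hT ↦ Eq.le hT : {T : OTree | T.size = n}.Finite).toFinset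

/-- The ordered forests with `n` vertices in total; these are the possible lists of children of
the root in an ordered tree with `n + 1` vertices. -/
noncomputable def forestsOfSize (n : ℕ) : Finset (List OTree) :=
  (finite_forestSize_eq n).toFinset

theorem mem_treesOfSize {n : ℕ} {T : OTree} : T ∈ treesOfSize n ↔ T.size = n := by
  simp [treesOfSize]

theorem mem_forestsOfSize {n : ℕ} {ts : List OTree} :
    ts ∈ forestsOfSize n ↔ forestSize ts = n := by
  simp [forestsOfSize]

theorem sum_treesOfSize_succ {M : Type*} [AddCommMonoid M] (w : OTree → M) (n : ℕ) :
    ∑ T ∈ treesOfSize (n + 1), w T = ∑ ts ∈ forestsOfSize n, w (node ts) := by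
  refine (Finset.sum_bij (fun ts _ ↦ node ts) ?_ ?_ ?_ fun _ _ ↦ rfl).symm
  · intro ts hts
    rw [mem_treesOfSize, size_node, mem_forestsOfSize.1 hts]
  · rintro ts - us - h
    exact node.inj h
  · rintro ⟨ts⟩ hT
    rw [mem_treesOfSize, size_node, Nat.succ_inj] at hT
    exact ⟨ts, mem_forestsOfSize.2 hT, rfl⟩

theorem sum_forestsOfSize_length_succ {M : Type*} [AddCommMonoid M] (g : List OTree → M)
    (k n : ℕ) :
    ∑ ts ∈ forestsOfSize n with ts.length = k + 1, g ts =
      ∑ p ∈ antidiagonal n, ∑ T ∈ treesOfSize p.1,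
        ∑ ts ∈ forestsOfSize p.2 with ts.length = k, g (T :: ts) := by
  simp only [← Finset.sum_product', Finset.sum_sigma']
  refine (Finset.sum_bij (fun x _ ↦ x.2.1 :: x.2.2) ?_ ?_ ?_ fun _ _ ↦ rfl).symm
  · rintro ⟨⟨i, j⟩, T, ts⟩
    simp +contextual [mem_treesOfSize, mem_forestsOfSize, forestSize_cons]
  · rintro ⟨⟨i, j⟩, T, ts⟩ hx ⟨⟨i', j'⟩, T', ts'⟩ hx' h
    simp_all [mem_treesOfSize, mem_forestsOfSize]
  · rintro (_ | ⟨T, ts⟩) h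
    · simp at h
    · exact ⟨⟨(T.size, forestSize ts), T, ts⟩, by
        simpa [mem_treesOfSize, mem_forestsOfSize, forestSize_cons] using h, rfl⟩

section TreeSeries

variable {R : Type*} [Semiring R]

/-- The generating function of ordered trees, weighted by `w`, by number of vertices. -/
noncomputable def treeSeries (w : OTree → R) : R⟦X⟧ :=
  mk fun n ↦ ∑ T ∈ treesOfSize n, w T

theorem coeff_treeSeries (w : OTree → R) (n : ℕ) :
    coeff n (treeSeries w) = ∑ T ∈ treesOfSize n, w T :=
  coeff_mk n _

theorem constantCoeff_treeSeries (w : OTree → R) : constantCoeff (treeSeries w) = 0 := by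
  rw [← coeff_zero_eq_constantCoeff_apply, coeff_treeSeries]
  exact Finset.sum_eq_zero fun T hT ↦ absurd (mem_treesOfSize.1 hT) T.size_pos.ne'

theorem coeff_treeSeries_pow (w : OTree → R) (k n : ℕ) :
    coeff n (treeSeries w ^ k) =
      ∑ ts ∈ forestsOfSize n with ts.length = k, (ts.map w).prod := by
  induction k generalizing n with
  | zero =>
    have hfilter : {ts ∈ forestsOfSize n | ts.length = 0} = if n = 0 then {[]} else ∅ := by
      ext ts
      rcases ts with _ | ⟨t, ts⟩ <;> split_ifs with hn <;>
        simp [mem_forestsOfSize, forestSize, hn, eq_comm]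
    rw [hfilter, pow_zero, coeff_one]
    split_ifs <;> simp
  | succ k ih =>
    rw [pow_succ', coeff_mul, sum_forestsOfSize_length_succ]
    simp only [ih, coeff_treeSeries, Finset.sum_mul_sum, List.map_cons, List.prod_cons]

theorem tsum_size_eq_coeff_treeSeries [TopologicalSpace R] (w : OTree → R) (n : ℕ) :
    ∑' T : {T : OTree // T.size = n}, w T = coeff n (treeSeries w) := by
  rw [coeff_treeSeries, ← Finset.tsum_subtype]
  exact (Equiv.subtypeEquivRight fun T ↦ mem_treesOfSize.symm).tsum_eq fun T : treesOfSize n ↦ w T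

end TreeSeries

theorem coeff_succ_treeSeries_prodF (φ : ℝ⟦X⟧) (u : ℕ → ℝ) (n : ℕ) :
    coeff (n + 1) (treeSeries (prodF fun c h ↦ coeff c φ * u h)) =
      u (n + 1) * coeff n (φ.subst (treeSeries (prodF fun c h ↦ coeff c φ * u h))) := by
  set w := prodF fun c h ↦ coeff c φ * u h with hw
  have hlength : ∀ ts ∈ forestsOfSize n, ts.length ∈ Finset.range (n + 1) := fun ts hts ↦
    Finset.mem_range_succ_iff.2 ((length_le_forestSize ts).trans (mem_forestsOfSize.1 hts).le)
  calc coeff (n + 1) (treeSeries w)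
    _ = ∑ ts ∈ forestsOfSize n, u (n + 1) * (coeff ts.length φ * (ts.map w).prod) := by
      rw [coeff_treeSeries, sum_treesOfSize_succ]
      refine Finset.sum_congr rfl fun ts hts ↦ ?_
      rw [hw, prodF_node, mem_forestsOfSize.1 hts]
      ring
    _ = u (n + 1) * ∑ k ∈ Finset.range (n + 1), coeff k φ * coeff n (treeSeries w ^ k) := by
      rw [← Finset.mul_sum, ← Finset.sum_fiberwise_of_maps_to hlength]
      congr! 2 with k
      rw [coeff_treeSeries_pow, Finset.mul_sum]
      refine Finset.sum_congr rfl fun ts hts ↦ ?_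
      rw [(Finset.mem_filter.1 hts).2]
    _ = u (n + 1) * coeff n (φ.subst (treeSeries w)) := by
      rw [coeff_subst_eq_sum_range (constantCoeff_treeSeries w)]

end OTree

theorem genChoose_eq_choose (m : ℝ) (k : ℕ) : genChoose m k = Ring.choose m k := by
  rw [genChoose, Ring.choose_eq_smul, ← Polynomial.aeval_eq_smeval, Polynomial.aeval_def,
    algebraMap_int_eq, ← Polynomial.eval_map, descPochhammer_map, descPochhammer_eval_eq_prod_range,
    smul_eq_mul, div_eq_inv_mul]

/-- Yang's formula with the extra parameter `s`: for every positive integer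
`n`, every real `m ≠ 0` and every real `s`,
`∑_{T ∈ O(n)} (∏_{v ∈ T} C(m,c_v) s^{c_v}) ∏_{v ∈ T} 1/(h_v m^{h_v-1})
  = s^{n-1}/n!`. -/
theorem yang_weighted_hook_length_formula (n : ℕ) (hn : 0 < n) (m : ℝ) (hm : m ≠ 0) (s : ℝ) :
    ∑' T : {T : OTree // T.size = n},
      ((T : OTree).prodF fun c _ => genChoose m c * s ^ c) *
        ((T : OTree).prodF fun _ h => 1 / ((h : ℝ) * m ^ (h - 1))) =
      s ^ (n - 1) / (Nat.factorial n : ℝ) := by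
  let φ : ℝ⟦X⟧ := rescale s (binomialSeries ℝ m)
  let u : ℕ → ℝ := fun h ↦ 1 / ((h : ℝ) * m ^ (h - 1))
  obtain ⟨n, rfl⟩ := Nat.exists_eq_add_one.2 hn
  have hweight (T : OTree) :
      (T.prodF fun c _ ↦ genChoose m c * s ^ c) * (T.prodF fun _ h ↦ u h) =
        T.prodF fun c h ↦ coeff c φ * u h := by
    simp only [φ, ← OTree.prodF_mul, genChoose_eq_choose, coeff_rescale, binomialSeries_coeff,
      smul_eq_mul, mul_one, mul_comm (s ^ _)]
  have hseries : OTree.treeSeries (OTree.prodF fun c h ↦ coeff c φ * u h) = expSubOneDiv s :=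
    eq_of_coeff_succ_eq_mul_coeff_subst (OTree.constantCoeff_treeSeries _)
      (constantCoeff_expSubOneDiv s) (OTree.coeff_succ_treeSeries_prodF φ u)
      (coeff_succ_expSubOneDiv_eq_mul_coeff_subst hm s)
  calc _ = ∑' T : {T : OTree // T.size = n + 1}, (T : OTree).prodF fun c h ↦ coeff c φ * u h :=
        tsum_congr fun T ↦ hweight T
    _ = coeff (n + 1) (expSubOneDiv s) := by
        rw [← hseries, ← OTree.tsum_size_eq_coeff_treeSeries]
    _ = s ^ n / (n + 1).factorial := coeff_succ_expSubOneDiv s n
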